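/- Let χ : [0,∞) → [0,∞) satisfy χ(t) = 0 for t ≤ (1−δ)r²c², χ(t) = t for t ≥ r²c², with χ linear increasing in between (as defined by the truncation with parameters c ≥ 0, r > 0, 0 < δ < 1). Then for every 0 ≤ w ≤ 1 and every t ≥ 0, χ(w²t) ≤ w²·χ(t). -/

import Mathlib

/-- The Lipschitz truncation surrogate `χ` used in the SAF concentration
argument. -/
noncomputable def chi (c δ r : ℝ) (t : ℝ) : ℝ :=
  if r ^ 2 * c ^ 2 < t then t
  else if (1 - δ) * r ^ 2 * c ^ 2 ≤ t then (1 / δ) * (t - r ^ 2 * c ^ 2) + r ^ 2 * c ^ 2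
  else 0

/-- Scaling inequality `χ(w²t) ≤ w²χ(t)` for `0 ≤ w ≤ 1` and `t ≥ 0`. -/
theorem chi_scaling (c δ r : ℝ) (hc : 0 ≤ c) (hδ0 : 0 < δ) (hδ1 : δ < 1)
    (hr : 0 < r) (w t : ℝ) (hw0 : 0 ≤ w) (hw1 : w ≤ 1) (ht : 0 ≤ t) :
    chi c δ r (w ^ 2 * t) ≤ w ^ 2 * chi c δ r t := by
  unfold chi
  have hs0 : 0 ≤ w ^ 2 := by positivity
  have hs1 : w ^ 2 ≤ 1 := by nlinarith
  have hA : 0 ≤ r ^ 2 * c ^ 2 := by positivity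
  rw [mul_assoc (1 - δ)]
  generalize w ^ 2 = s at *
  generalize r ^ 2 * c ^ 2 = A at *
  have hk : 1 ≤ 1 / δ := by rw [le_div_iff₀ hδ0]; linarith
  have hkd : 1 / δ * δ = 1 := by field_simp
  generalize 1 / δ = k at *
  have hst : s * t ≤ t := by nlinarith
  have hmid : (1 - δ) * A ≤ t → 0 ≤ k * (t - A) + A := by
    intro h
    have h1 : k * (t - A) + A = k * (t - (1 - δ) * A) := by
      linear_combination (-A) * hkd
    rw [h1]
    exact mul_nonneg (by linarith) (by linarith)
  split_ifs with h1 h2 h3 h4 h5 h6 h7 h8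
  all_goals first
    | linarith
    | nlinarith [mul_nonneg (sub_nonneg.2 hk) (sub_nonneg.2 (not_lt.1 h1))]
    | nlinarith [mul_nonneg (mul_nonneg (sub_nonneg.2 hk) hA) (sub_nonneg.2 hs1)]
    | exact mul_nonneg hs0 ht
    | exact mul_nonneg hs0 (hmid (by assumption))
    | simp
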